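/- arXiv:1801.10436 — 2 statements merged into one kernel-verified Lean document; each statement's English description precedes it below -/
import Mathlib

section
/- There exists a sequence of transitive carefully synchronizing PFAs on two symbols with shortest carefully synchronizing word length Ω(φ^{n/5}) in the number n of states: there exist a constant c > 0 and an integer N such that for every n ≥ N there is a transitive PFA with n states and an alphabet of 2 symbols which is carefully synchronizing and whose shortest carefully synchronizing word has length at least c·φ^{n/5}, where φ = (1+√5)/2. -/
/-- One step of a PFA on an `Option` state. -/
def pfaStep {Q σ : Type*} (δ : Q → σ → Option Q) (o : Option Q) (a : σ) : Option Q :=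
  o.bind fun q => δ q a

/-- The (partial) state reached from `q` after reading word `w` in the PFA `δ`. -/
def pfaRun {Q σ : Type*} (δ : Q → σ → Option Q) (q : Q) (w : List σ) : Option Q :=
  w.foldl (pfaStep δ) (some q)

/-- A word `w` is carefully synchronizing for the PFA `δ`. -/
def IsCareSyncWord {Q σ : Type*} (δ : Q → σ → Option Q) (w : List σ) : Prop :=
  ∃ qs : Q, ∀ q : Q, pfaRun δ q w = some qs

/-- A PFA is transitive if every state can be reached from every state by some word. -/
def PFATransitive {Q σ : Type*} (δ : Q → σ → Option Q) : Prop :=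
  ∀ q q' : Q, ∃ w : List σ, pfaRun δ q w = some q'

/-!
Fix a base `b` and put `k + 2` tokens on a cyclic tape of `k + 2` cells. One token is a marker, the
others hold the digits, between `0` and `b`, of a redundant base `b` number. The word `10` rotates
the tape. A second `1` in a row also performs a carry, and is undefined unless that carry is legal;
a second `0` in a row resets the tape, with the marker in cell `0` and zeros in the other cells.
A legal carry out of the marker adds `1` to the number and every other legal carry preserves it, so
that it grows by at most `1` per letter, while tokens can merge only when the leading digit
overflows, that is, at value at least `b ^ (k + 1)`. Conversely, counting up to an overflow merges
the marker with the leading token, and repeating this from the reset tape merges all tokens.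
The automaton has `2 * (b + 2) * (k + 2)` states, which gives the growth rate
`b ^ (1 / (2 * b + 4))`; for `b = 3` it exceeds `φ ^ (1 / 5)` because `φ ^ 2 < 3`. The remaining
numbers of states are obtained by splitting a state with a loop into a chain.
-/

section Runs

variable {Q R σ ι κ : Type*} {δ : Q → σ → Option Q} {ε : R → σ → Option R}

theorem pfaRun_concat (δ : Q → σ → Option Q) (q : Q) (u : List σ) (a : σ) :
    pfaRun δ q (u ++ [a]) = (pfaRun δ q u).bind fun r => δ r a :=
  List.foldl_concat ..

theorem pfaRun_append (δ : Q → σ → Option Q) (q : Q) (u v : List σ) :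
    pfaRun δ q (u ++ v) = (pfaRun δ q u).bind fun r => pfaRun δ r v := by
  induction v using List.reverseRecOn with
  | nil => simp [pfaRun]
  | append_singleton v a ih =>
    simp only [← List.append_assoc, pfaRun_concat, ih, Option.bind_assoc]

theorem pfaRun_append_of_eq_some {q r : Q} {u : List σ} (h : pfaRun δ q u = some r)
    (v : List σ) : pfaRun δ q (u ++ v) = pfaRun δ r v := by
  rw [pfaRun_append, h, Option.bind_some]

theorem PFATransitive.exists_step_of_ne [Nontrivial Q] (h : PFATransitive δ) (q : Q) :
    ∃ p a, p ≠ q ∧ δ p a = some q := by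
  obtain ⟨r, hr⟩ := exists_ne q
  obtain ⟨w, hw⟩ := h r q
  induction w using List.reverseRecOn with
  | nil => exact absurd (Option.some.inj hw) hr
  | append_singleton u a ih =>
    rw [pfaRun_concat, Option.bind_eq_some_iff] at hw
    obtain ⟨p, hp, hpq⟩ := hw
    by_cases hpe : p = q
    · exact ih (hpe ▸ hp)
    · exact ⟨p, a, hpe, hpq⟩

/-- Simultaneous reachability: a single word takes `f i` to `g i` for all `i`. Transitivity is the
case of one-element families, careful synchronization the case of `id` and a constant family. -/
def PFAReach (δ : Q → σ → Option Q) (f g : ι → Q) : Prop :=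
  ∃ w, ∀ i, pfaRun δ (f i) w = some (g i)

namespace PFAReach

variable {f g h : ι → Q}

theorem refl (δ : Q → σ → Option Q) (f : ι → Q) : PFAReach δ f f :=
  ⟨[], fun _ => rfl⟩

theorem trans (hfg : PFAReach δ f g) (hgh : PFAReach δ g h) : PFAReach δ f h := by
  obtain ⟨u, hu⟩ := hfg
  obtain ⟨v, hv⟩ := hgh
  exact ⟨u ++ v, fun i => by rw [pfaRun_append_of_eq_some (hu i), hv]⟩

instance : Trans (PFAReach δ : (ι → Q) → (ι → Q) → Prop) (PFAReach δ) (PFAReach δ) :=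
  ⟨trans⟩

theorem of_step (a : σ) (h : ∀ i, δ (f i) a = some (g i)) : PFAReach δ f g :=
  ⟨[a], h⟩

theorem comp (h : PFAReach δ f g) (e : κ → ι) : PFAReach δ (f ∘ e) (g ∘ e) :=
  h.imp fun _ hw i => hw (e i)

theorem iterate {e : ι → ι} (h : PFAReach δ f (f ∘ e)) (n : ℕ) : PFAReach δ f (f ∘ e^[n]) := by
  induction n with
  | zero => exact refl δ f
  | succ n ih => exact h.trans (ih.comp e)

end PFAReach

/-- Homomorphisms of PFAs: maps of states that commute with the transitions and preserve and
reflect definedness. -/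
def IsPFAHom (f : Q → R) (δ : Q → σ → Option Q) (ε : R → σ → Option R) : Prop :=
  ∀ q a, (δ q a).map f = ε (f q) a

namespace IsPFAHom

variable {f : Q → R}

theorem map_pfaRun (hf : IsPFAHom f δ ε) (q : Q) (w : List σ) :
    (pfaRun δ q w).map f = pfaRun ε (f q) w := by
  induction w using List.reverseRecOn with
  | nil => rfl
  | append_singleton u a ih =>
    rw [pfaRun_concat, pfaRun_concat, ← ih, Option.map_bind, Option.bind_map]
    exact congrArg _ (funext fun r => hf r a)

theorem exists_pfaRun_eq_some (hf : IsPFAHom f δ ε) {q : Q} {w : List σ} {r : R}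
    (h : pfaRun ε (f q) w = some r) : ∃ q', pfaRun δ q w = some q' ∧ f q' = r := by
  rwa [← hf.map_pfaRun, Option.map_eq_some_iff] at h

theorem pfaTransitive (hf : IsPFAHom f δ ε) (hsurj : f.Surjective) (h : PFATransitive δ) :
    PFATransitive ε := by
  refine hsurj.forall₂.2 fun q q' => (h q q').imp fun w hw => ?_
  rw [← hf.map_pfaRun, hw, Option.map_some]

theorem isCareSyncWord (hf : IsPFAHom f δ ε) (hsurj : f.Surjective) {w : List σ}
    (h : IsCareSyncWord δ w) : IsCareSyncWord ε w := by
  obtain ⟨qs, hqs⟩ := h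
  refine ⟨f qs, hsurj.forall.2 fun q => ?_⟩
  rw [← hf.map_pfaRun, hqs, Option.map_some]

end IsPFAHom

/-- The PFA `δ` with its states renamed along `e`. -/
def transport (e : Q ≃ R) (δ : Q → σ → Option Q) : R → σ → Option R :=
  fun r a => (δ (e.symm r) a).map e

theorem isPFAHom_transport (e : Q ≃ R) (δ : Q → σ → Option Q) : IsPFAHom e δ (transport e δ) := by
  simp [IsPFAHom, transport]

theorem isPFAHom_symm_transport (e : Q ≃ R) (δ : Q → σ → Option Q) :
    IsPFAHom e.symm (transport e δ) δ := by
  simp [IsPFAHom, transport]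

end Runs

section Padding

variable {Q R σ : Type*} {δ : Q → σ → Option Q} {L : ℕ} {q₀ : Q} {a : σ}

/-- Transitive carefully synchronizing PFAs all of whose carefully synchronizing words have length
at least `L`. -/
structure IsSlowPFA (δ : Q → σ → Option Q) (L : ℕ) : Prop where
  transitive : PFATransitive δ
  exists_sync : ∃ w, IsCareSyncWord δ w
  le_length : ∀ w, IsCareSyncWord δ w → L ≤ w.length

theorem isSlowPFA_transport (h : IsSlowPFA δ L) (e : Q ≃ R) : IsSlowPFA (transport e δ) L where
  transitive := (isPFAHom_transport e δ).pfaTransitive e.surjective h.transitive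
  exists_sync := h.exists_sync.imp fun _ => (isPFAHom_transport e δ).isCareSyncWord e.surjective
  le_length w hw :=
    h.le_length w ((isPFAHom_symm_transport e δ).isCareSyncWord e.symm.surjective hw)

/-- The PFA `δ` with a twin `none` of the state `q₀`, entered from `q₀` and from itself by the
letter `a`. Meant for `δ q₀ a = some q₀`, when merging the twins is a homomorphism to `δ`. -/
def addTwin [DecidableEq Q] [DecidableEq σ] (δ : Q → σ → Option Q) (q₀ : Q) (a : σ) :
    Option Q → σ → Option (Option Q) :=
  fun x c => if x.getD q₀ = q₀ ∧ c = a then some none else (δ (x.getD q₀) c).map some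

theorem eq_some_of_getD_ne {x : Option Q} (hx : x.getD q₀ ≠ q₀) : x = some (x.getD q₀) := by
  cases x with
  | none => exact absurd rfl hx
  | some => rfl

section Twin

variable [DecidableEq Q] [DecidableEq σ]

theorem addTwin_of_getD_eq {x : Option Q} (hx : x.getD q₀ = q₀) :
    addTwin δ q₀ a x a = some none := by
  simp [addTwin, hx]

theorem addTwin_some_of_ne {p : Q} (hp : p ≠ q₀) (c : σ) :
    addTwin δ q₀ a (some p) c = (δ p c).map some := by
  simp [addTwin, hp]

theorem isPFAHom_addTwin (hloop : δ q₀ a = some q₀) :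
    IsPFAHom (fun x : Option Q => x.getD q₀) (addTwin δ q₀ a) δ := by
  intro x c
  unfold addTwin
  split_ifs with h
  · simp [h.1, h.2, hloop]
  · simp [Option.map_map, Function.comp_def]

theorem pfaTransitive_addTwin [Nontrivial Q] (hloop : δ q₀ a = some q₀) (h : PFATransitive δ) :
    PFATransitive (addTwin δ q₀ a) := by
  have reach_ne : ∀ x q, q ≠ q₀ → ∃ w, pfaRun (addTwin δ q₀ a) x w = some (some q) := by
    intro x q hq
    obtain ⟨w, hw⟩ := h (x.getD q₀) q
    obtain ⟨y, hy, rfl⟩ := (isPFAHom_addTwin hloop).exists_pfaRun_eq_some hw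
    exact ⟨w, by rw [hy, ← eq_some_of_getD_ne hq]⟩
  rintro x (_ | q)
  · obtain ⟨w, hw⟩ := h (x.getD q₀) q₀
    obtain ⟨y, hy, hyq⟩ := (isPFAHom_addTwin hloop).exists_pfaRun_eq_some hw
    exact ⟨w ++ [a], by rw [pfaRun_append_of_eq_some hy]; exact addTwin_of_getD_eq hyq⟩
  · obtain rfl | hq := eq_or_ne q q₀
    · obtain ⟨p, c, hp, hpc⟩ := h.exists_step_of_ne q
      obtain ⟨w, hw⟩ := reach_ne x p hp
      refine ⟨w ++ [c], ?_⟩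
      rw [pfaRun_concat, hw, Option.bind_some, addTwin_some_of_ne hp, hpc, Option.map_some]
    · exact reach_ne x q hq

theorem exists_isCareSyncWord_addTwin (hloop : δ q₀ a = some q₀)
    (h : ∃ w, IsCareSyncWord δ w) : ∃ w, IsCareSyncWord (addTwin δ q₀ a) w := by
  obtain ⟨w, qs, hw⟩ := h
  have lift : ∀ x, ∃ y, pfaRun (addTwin δ q₀ a) x w = some y ∧ y.getD q₀ = qs :=
    fun x => (isPFAHom_addTwin hloop).exists_pfaRun_eq_some (hw (x.getD q₀))
  obtain rfl | hq := eq_or_ne qs q₀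
  · refine ⟨w ++ [a], none, fun x => ?_⟩
    obtain ⟨y, hy, hyq⟩ := lift x
    rw [pfaRun_append_of_eq_some hy]
    exact addTwin_of_getD_eq hyq
  · refine ⟨w, some qs, fun x => ?_⟩
    obtain ⟨y, hy, rfl⟩ := lift x
    rw [hy, ← eq_some_of_getD_ne hq]

theorem isSlowPFA_addTwin [Nontrivial Q] (h : IsSlowPFA δ L) (hloop : δ q₀ a = some q₀) :
    IsSlowPFA (addTwin δ q₀ a) L where
  transitive := pfaTransitive_addTwin hloop h.transitive
  exists_sync := exists_isCareSyncWord_addTwin hloop h.exists_sync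
  le_length w hw := h.le_length w <|
    (isPFAHom_addTwin hloop).isCareSyncWord (fun q => ⟨some q, rfl⟩) hw

end Twin

theorem IsSlowPFA.exists_fin_card_add [Fintype Q] [Nontrivial Q] (h : IsSlowPFA δ L)
    (hloop : δ q₀ a = some q₀) (m : ℕ) :
    ∃ (ε : Fin (Fintype.card Q + m) → σ → Option (Fin (Fintype.card Q + m))) (r₀ : _),
      IsSlowPFA ε L ∧ ε r₀ a = some r₀ := by
  classical
  induction m with
  | zero =>
    let e := Fintype.equivFin Q
    exact ⟨transport e δ, e q₀, isSlowPFA_transport h e, by simp [transport, hloop]⟩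
  | succ m ih =>
    obtain ⟨ε, r₀, hε, hr₀⟩ := ih
    have : Nontrivial (Fin (Fintype.card Q + m)) :=
      Fin.nontrivial_iff_two_le.2 (Nat.le_add_right_of_le Fintype.one_lt_card)
    let e : Option (Fin (Fintype.card Q + m)) ≃ Fin (Fintype.card Q + (m + 1)) :=
      finSuccEquivLast.symm
    refine ⟨transport e (addTwin ε r₀ a), e none,
      isSlowPFA_transport (isSlowPFA_addTwin hε hr₀) e, ?_⟩
    simp [transport, addTwin]

end Padding

section Counter

variable {b k : ℕ}

/-- The states of the rotating counter, read as positions of a single token: whether the tape is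
armed, the symbol of the token (`none` for the marker, else a digit) and its cell. -/
abbrev CounterState (b k : ℕ) : Type := Bool × Option (Fin (b + 1)) × Fin (k + 2)

/-- The cell of a token. -/
def cell (q : CounterState b k) : Fin (k + 2) := q.2.2

/-- The state of token `j` on a tape that is rotated by `s` and carries the digits `d`. Token `0` is
the marker, so that `d 0` is never read. -/
def token (armed : Bool) (s : Fin (k + 2)) (d : Fin (k + 2) → Fin (b + 1)) (j : Fin (k + 2)) :
    CounterState b k :=
  (armed, if j = 0 then none else some (d j), j + s)

/-- The effect of a carry from cell `0` to cell `1` on a digit `d` in cell `p`, undefined if the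
carry is illegal. -/
def carryDigit (d : Fin (b + 1)) (p : Fin (k + 2)) : Option (Fin (b + 1)) :=
  if p = 0 then if d = Fin.last b then some 0 else none
  else if p = 1 then if d = Fin.last b then none else some (d + 1)
  else some d

/-- The effect on a token of a carry from cell `0` to cell `1` followed by a rotation. A carry into
the marker is an overflow, which merges the marker with the digit that comes from cell `0`. -/
def carryToken : Option (Fin (b + 1)) → Fin (k + 2) → Option (CounterState b k)
  | none, p => if p = 1 then some (false, some 0, -1) else some (false, none, p - 1)
  | some d, p => (carryDigit d p).map fun d' => (false, some d', p - 1)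

/-- The rotating counter: the letter `0` arms an unarmed tape and resets an armed one, the letter
`1` rotates the tape by one cell, with a carry if the tape is unarmed. -/
def counter (b k : ℕ) : CounterState b k → Fin 2 → Option (CounterState b k)
  | (false, x, p), 0 => some (true, x, p)
  | (true, _, p), 0 => some (token true 0 0 p)
  | (false, x, p), 1 => carryToken x p
  | (true, x, p), 1 => some (false, x, p - 1)

/-- The digits after a carry from token `i` to token `i + 1`. -/
def carryDigits (d : Fin (k + 2) → Fin (b + 1)) (i : Fin (k + 1)) : Fin (k + 2) → Fin (b + 1) :=
  Function.update (Function.update d i.castSucc 0) i.succ (d i.succ + 1)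

section Transitions

variable {s : Fin (k + 2)} {d : Fin (k + 2) → Fin (b + 1)}

theorem counter_token_true_one (j : Fin (k + 2)) :
    counter b k (token true s d j) 1 = some (token false (s - 1) d j) := by
  simp only [counter, token, add_sub_assoc]

theorem counter_token_false_one_zero :
    counter b k (token false s d 0) 1 =
      if s = 1 then some (false, some 0, -1) else some (token false (s - 1) d 0) := by
  simp [counter, token, carryToken]

theorem counter_token_false_one {j : Fin (k + 2)} (hj : j ≠ 0) :
    counter b k (token false s d j) 1 =
      (carryDigit (d j) (j + s)).map fun x => (false, some x, j + s - 1) := by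
  simp [counter, token, carryToken, hj]

theorem carryDigit_eq_some_carryDigits {i : Fin (k + 1)} {j : Fin (k + 2)}
    (hout : j = i.castSucc → d j = Fin.last b) (hin : d i.succ ≠ Fin.last b) :
    carryDigit (d j) (j + -i.castSucc) = some (carryDigits d i j) := by
  have h0 : j + -i.castSucc = 0 ↔ j = i.castSucc := by rw [← sub_eq_add_neg, sub_eq_zero]
  have h1 : j + -i.castSucc = 1 ↔ j = i.succ := by
    rw [← sub_eq_add_neg, sub_eq_iff_eq_add, add_comm (1 : Fin (k + 2)), Fin.coeSucc_eq_succ]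
  obtain rfl | hi := eq_or_ne j i.castSucc
  · simp [carryDigit, carryDigits, hout rfl, Fin.castSucc_lt_succ.ne]
  obtain rfl | hi' := eq_or_ne j i.succ
  · simp [carryDigit, carryDigits, h0, h1, hi, hin]
  · simp [carryDigit, carryDigits, h0, h1, hi, hi']

theorem counter_token_carryDigits {i : Fin (k + 1)}
    (hout : i ≠ 0 → d i.castSucc = Fin.last b) (hin : d i.succ ≠ Fin.last b) (j : Fin (k + 2)) :
    counter b k (token false (-i.castSucc) d j) 1 =
      some (token false (-i.castSucc - 1) (carryDigits d i) j) := by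
  obtain rfl | hj := eq_or_ne j 0
  · have hs : -i.castSucc ≠ 1 := by
      rw [Ne, neg_eq_iff_add_eq_zero, Fin.coeSucc_eq_succ]
      exact i.succ_ne_zero
    rw [counter_token_false_one_zero, if_neg hs]
    rfl
  · have hout' : j = i.castSucc → d j = Fin.last b := by
      rintro rfl
      exact hout fun hi => hj (by rw [hi, Fin.castSucc_zero])
    rw [counter_token_false_one hj, carryDigit_eq_some_carryDigits hout' hin]
    simp [token, hj, add_sub_assoc]

theorem eq_last_of_isSome_counter {i : Fin (k + 2)} (hi : i ≠ 0)
    (h : (counter b k (token false (-i) d i) 1).isSome) : d i = Fin.last b := by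
  by_contra hd
  simp [counter_token_false_one hi, carryDigit, hd] at h

theorem ne_last_of_isSome_counter {i : Fin (k + 1)}
    (h : (counter b k (token false (-i.castSucc) d i.succ) 1).isSome) :
    d i.succ ≠ Fin.last b := by
  intro hd
  have hcell : i.succ + -i.castSucc = 1 := by
    rw [← Fin.coeSucc_eq_succ]
    abel
  simp [counter_token_false_one i.succ_ne_zero, carryDigit, hd, hcell] at h

end Transitions

section LowerBound

/-- The number with the redundant base `b` digits `d`, the digit of token `i + 1` having weight
`b ^ i`. -/
def digitValue (d : Fin (k + 2) → Fin (b + 1)) : ℕ :=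
  ∑ i : Fin (k + 1), (d i.succ).val * b ^ i.val

variable {d : Fin (k + 2) → Fin (b + 1)}

theorem digitValue_zero : digitValue (0 : Fin (k + 2) → Fin (b + 1)) = 0 := by
  simp [digitValue]

theorem digitValue_update_zero (x : Fin (b + 1)) :
    digitValue (Function.update d 0 x) = digitValue d := by
  simp [digitValue]

theorem digitValue_update_succ (i : Fin (k + 1)) (x : Fin (b + 1)) :
    digitValue (Function.update d i.succ x) + (d i.succ).val * b ^ i.val =
      digitValue d + x.val * b ^ i.val := by
  simp only [digitValue, ← Finset.add_sum_erase _ _ (Finset.mem_univ i), Function.update_self]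
  rw [Finset.sum_congr rfl fun j hj => by
    rw [Function.update_of_ne ((Fin.succ_injective _).ne (Finset.ne_of_mem_erase hj))]]
  ring

theorem pow_le_digitValue (hd : d (Fin.last (k + 1)) = Fin.last b) :
    b ^ (k + 1) ≤ digitValue d := by
  calc b ^ (k + 1) = (d (Fin.last k).succ).val * b ^ (Fin.last k).val := by
        rw [Fin.succ_last, hd, Fin.val_last, Fin.val_last, pow_succ']
    _ ≤ digitValue d := Finset.single_le_sum
        (f := fun i : Fin (k + 1) => (d i.succ).val * b ^ i.val)
        (fun _ _ => Nat.zero_le _) (Finset.mem_univ _)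

theorem digitValue_carryDigits_le {i : Fin (k + 1)}
    (hout : i ≠ 0 → d i.castSucc = Fin.last b) (hin : d i.succ ≠ Fin.last b) :
    digitValue (carryDigits d i) ≤ digitValue d + 1 := by
  have hval : (d i.succ + 1).val = (d i.succ).val + 1 :=
    Fin.val_add_one_of_lt (Fin.lt_last_iff_ne_last.2 hin)
  have hinc := digitValue_update_succ (d := Function.update d i.castSucc 0) i (d i.succ + 1)
  rw [← carryDigits, Function.update_of_ne Fin.castSucc_lt_succ.ne', hval] at hinc
  cases i using Fin.cases with
  | zero =>
    rw [Fin.castSucc_zero, digitValue_update_zero, Fin.val_zero, pow_zero] at hinc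
    linarith
  | succ i =>
    have hdec := digitValue_update_succ (d := d) i.castSucc 0
    rw [← Fin.castSucc_succ] at hdec
    rw [hout i.succ_ne_zero, Fin.val_last, Fin.val_castSucc, Fin.val_zero] at hdec
    rw [Fin.val_succ, pow_succ'] at hinc
    linarith

theorem exists_counter_token_eq {armed : Bool} {s : Fin (k + 2)} {a : Fin 2}
    (hval : digitValue d < b ^ (k + 1))
    (hdef : ∀ j, (counter b k (token armed s d j) a).isSome) :
    ∃ armed' s' d', digitValue d' ≤ digitValue d + 1 ∧
      ∀ j, ∃ i, counter b k (token armed s d i) a = some (token armed' s' d' j) := by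
  match armed, a with
  | false, 0 => exact ⟨true, s, d, Nat.le_succ _, fun j => ⟨j, rfl⟩⟩
  | true, 0 =>
    refine ⟨true, 0, 0, by simp [digitValue_zero], fun j => ⟨j - s, ?_⟩⟩
    simp [counter, token]
  | true, 1 => exact ⟨false, s - 1, d, Nat.le_succ _, fun j => ⟨j, counter_token_true_one j⟩⟩
  | false, 1 =>
    obtain ⟨i, rfl⟩ := neg_surjective s
    cases i using Fin.lastCases with
    | last =>
      have hlast := eq_last_of_isSome_counter (Fin.last_pos.ne') (hdef _)
      exact absurd (pow_le_digitValue hlast) hval.not_ge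
    | cast i =>
      have hout : i ≠ 0 → d i.castSucc = Fin.last b := fun hi =>
        eq_last_of_isSome_counter (Fin.castSucc_ne_zero_iff.2 hi) (hdef _)
      have hin := ne_last_of_isSome_counter (hdef i.succ)
      exact ⟨false, _, carryDigits d i, digitValue_carryDigits_le hout hin,
        fun j => ⟨j, counter_token_carryDigits hout hin j⟩⟩

theorem exists_pfaRun_eq_token (w : List (Fin 2)) (hlen : w.length < b ^ (k + 1))
    (hdef : ∀ q, (pfaRun (counter b k) q w).isSome) :
    ∃ armed s d, digitValue d ≤ w.length ∧
      ∀ j, ∃ q, pfaRun (counter b k) q w = some (token armed s d j) := by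
  induction w using List.reverseRecOn with
  | nil => exact ⟨true, 0, 0, digitValue_zero.le, fun j => ⟨_, rfl⟩⟩
  | append_singleton u a ih =>
    rw [List.length_append, List.length_singleton] at hlen ⊢
    simp only [pfaRun_concat] at hdef ⊢
    obtain ⟨armed, s, d, hd, hreach⟩ :=
      ih (by omega) fun q => Option.isSome_of_isSome_bind (hdef q)
    have hstep : ∀ j, (counter b k (token armed s d j) a).isSome := fun j => by
      obtain ⟨q, hq⟩ := hreach j
      simpa only [hq, Option.bind_some] using hdef q
    obtain ⟨armed', s', d', hd', hnext⟩ := exists_counter_token_eq (by omega) hstep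
    refine ⟨armed', s', d', by omega, fun j => ?_⟩
    obtain ⟨i, hi⟩ := hnext j
    obtain ⟨q, hq⟩ := hreach i
    exact ⟨q, by rw [hq, Option.bind_some, hi]⟩

theorem pow_le_length_of_isCareSyncWord {w : List (Fin 2)} (hw : IsCareSyncWord (counter b k) w) :
    b ^ (k + 1) ≤ w.length := by
  by_contra! hlen
  obtain ⟨qs, hqs⟩ := hw
  obtain ⟨armed, s, d, -, hreach⟩ := exists_pfaRun_eq_token w hlen fun q => by simp [hqs q]
  have htoken : ∀ j, token armed s d j = qs := fun j => by
    obtain ⟨q, hq⟩ := hreach j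
    exact Option.some.inj (hq.symm.trans (hqs q))
  have hcell : (0 : Fin (k + 2)) + s = 1 + s :=
    congrArg cell ((htoken 0).trans (htoken 1).symm)
  simp at hcell

end LowerBound

section UpperBound

theorem reach_arm (s : Fin (k + 2)) (d : Fin (k + 2) → Fin (b + 1)) :
    PFAReach (counter b k) (token false s d) (token true s d) :=
  .of_step 0 fun _ => rfl

theorem reach_disarm (s : Fin (k + 2)) (d : Fin (k + 2) → Fin (b + 1)) :
    PFAReach (counter b k) (token true s d) (token false (s - 1) d) :=
  .of_step 1 counter_token_true_one

theorem reach_rotate_armed (s s' : Fin (k + 2)) (d : Fin (k + 2) → Fin (b + 1)) :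
    PFAReach (counter b k) (token true s d) (token true s' d) := by
  obtain ⟨t, rfl⟩ : ∃ t, s' = s - t := ⟨s - s', by abel⟩
  induction t using Fin.induction with
  | zero => simpa using PFAReach.refl _ _
  | succ t ih =>
    rw [← Fin.coeSucc_eq_succ, ← sub_sub]
    exact ih.trans ((reach_disarm _ d).trans (reach_arm _ d))

theorem reach_rotate (armed armed' : Bool) (s s' : Fin (k + 2))
    (d : Fin (k + 2) → Fin (b + 1)) :
    PFAReach (counter b k) (token armed s d) (token armed' s' d) := by
  have start : PFAReach (counter b k) (token armed s d) (token true s d) := by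
    cases armed
    · exact reach_arm s d
    · exact .refl _ _
  refine start.trans ?_
  cases armed'
  · have h := (reach_rotate_armed s (s' + 1) d).trans (reach_disarm _ d)
    rwa [add_sub_cancel_right] at h
  · exact reach_rotate_armed s s' d

theorem reach_carryDigits {d : Fin (k + 2) → Fin (b + 1)} {i : Fin (k + 1)}
    (hout : i ≠ 0 → d i.castSucc = Fin.last b) (hin : d i.succ ≠ Fin.last b) :
    PFAReach (counter b k) (token true 0 d) (token true 0 (carryDigits d i)) :=
  calc PFAReach (counter b k) (token true 0 d) (token false (-i.castSucc) d) :=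
        reach_rotate ..
    PFAReach _ _ (token false (-i.castSucc - 1) (carryDigits d i)) :=
        .of_step 1 (counter_token_carryDigits hout hin)
    PFAReach _ _ (token true 0 (carryDigits d i)) := reach_rotate ..

theorem carryDigits_update {d : Fin (k + 2) → Fin (b + 1)} {i : Fin (k + 1)}
    (hd : d i.castSucc = 0) (x y : Fin (b + 1)) :
    carryDigits (Function.update (Function.update d i.succ x) i.castSucc y) i =
      Function.update d i.succ (x + 1) := by
  have hne : i.succ ≠ i.castSucc := Fin.castSucc_lt_succ.ne'
  rw [carryDigits, Function.update_of_ne hne, Function.update_self, Function.update_idem,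
    Function.update_comm hne.symm, Function.update_idem, Function.update_eq_self_iff,
    Function.update_of_ne hne.symm, hd]

theorem reach_carry {d : Fin (k + 2) → Fin (b + 1)} {i : Fin (k + 1)} {x y : Fin (b + 1)}
    (hd : d i.castSucc = 0) (hx : x ≠ Fin.last b) (hy : i ≠ 0 → y = Fin.last b) :
    PFAReach (counter b k)
      (token true 0 (Function.update (Function.update d i.succ x) i.castSucc y))
      (token true 0 (Function.update d i.succ (x + 1))) := by
  rw [← carryDigits_update hd x y]
  refine reach_carryDigits (fun hi => ?_) ?_
  · rw [Function.update_self, hy hi]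
  · rwa [Function.update_of_ne Fin.castSucc_lt_succ.ne', Function.update_self]

theorem reach_update_of_increment {d : Fin (k + 2) → Fin (b + 1)} {j : Fin (k + 2)}
    (hd : d j = 0)
    (hinc : ∀ x ≠ Fin.last b, PFAReach (counter b k) (token true 0 (Function.update d j x))
      (token true 0 (Function.update d j (x + 1)))) (x : Fin (b + 1)) :
    PFAReach (counter b k) (token true 0 d) (token true 0 (Function.update d j x)) := by
  induction x using Fin.induction with
  | zero =>
    rw [← hd, Function.update_eq_self]
    exact .refl _ _
  | succ x ih =>
    rw [← Fin.coeSucc_eq_succ]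
    exact ih.trans (hinc _ x.castSucc_lt_last.ne)

theorem update_succ_apply_of_le {i : Fin (k + 1)} {j : Fin (k + 2)} (hj : j ≤ i.castSucc)
    (d : Fin (k + 2) → Fin (b + 1)) (x : Fin (b + 1)) : Function.update d i.succ x j = d j :=
  Function.update_of_ne (hj.trans_lt Fin.castSucc_lt_succ).ne ..

-- The carry that increments digit `i + 1` needs digit `i` to be full, so count that one up first.
theorem reach_increment (i : Fin (k + 1)) (d : Fin (k + 2) → Fin (b + 1))
    (hd : ∀ j ≤ i.castSucc, d j = 0) {x : Fin (b + 1)} (hx : x ≠ Fin.last b) :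
    PFAReach (counter b k) (token true 0 (Function.update d i.succ x))
      (token true 0 (Function.update d i.succ (x + 1))) := by
  induction i using Fin.induction generalizing d x with
  | zero =>
    have hcarry := reach_carry (y := 0) (hd _ le_rfl) hx (absurd rfl)
    rwa [Function.update_eq_self_iff.2
      ((update_succ_apply_of_le le_rfl d x).trans (hd _ le_rfl)).symm] at hcarry
  | succ i ih =>
    have hzero : ∀ j ≤ i.succ.castSucc, Function.update d i.succ.succ x j = 0 := fun j hj =>
      (update_succ_apply_of_le hj d x).trans (hd j hj)
    have hfill : PFAReach (counter b k) (token true 0 (Function.update d i.succ.succ x))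
        (token true 0
          (Function.update (Function.update d i.succ.succ x) i.succ.castSucc (Fin.last b))) :=
      reach_update_of_increment (hzero _ le_rfl)
        (fun y hy => ih _ (fun j hj => hzero j (hj.trans Fin.castSucc_lt_succ.le)) hy) _
    exact hfill.trans (reach_carry (hd _ le_rfl) hx fun _ => rfl)

theorem reach_digit {j : Fin (k + 2)} (hj : j ≠ 0) (x : Fin (b + 1)) :
    PFAReach (counter b k) (token true 0 0) (token true 0 (Function.update 0 j x)) := by
  obtain ⟨i, rfl⟩ := Fin.exists_succ_eq_of_ne_zero hj
  exact reach_update_of_increment rfl (fun y hy => reach_increment i 0 (fun _ _ => rfl) hy) x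

theorem pfaRun_reset (q : CounterState b k) :
    pfaRun (counter b k) q [0, 0] = some (token true 0 0 (cell q)) := by
  obtain ⟨_ | _, x, p⟩ := q
  · rfl
  · exact congrArg (fun p => some (token true 0 0 p)) (add_zero p)

theorem reach_reset {ι : Type*} (f : ι → CounterState b k) :
    PFAReach (counter b k) f (token true 0 0 ∘ cell ∘ f) :=
  ⟨[0, 0], fun i => pfaRun_reset (f i)⟩

theorem reach_reset_add (s : Fin (k + 2)) :
    PFAReach (counter b k) (token true 0 0) (token true 0 0 ∘ (· + s)) :=
  (reach_rotate true true 0 s 0).trans (reach_reset _)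

/-- One round of the synchronization, on cells: an overflow takes the marker from cell `0` to cell
`-1`, then the tape is rotated by one cell. -/
def collapse (p : Fin (k + 2)) : Fin (k + 2) := if p = 0 then 0 else p + 1

theorem val_iterate_collapse (n : ℕ) (p : Fin (k + 2)) :
    collapse^[n] p = 0 ∨ (collapse^[n] p).val = p.val + n := by
  induction n with
  | zero => exact .inr rfl
  | succ n ih =>
    rw [Function.iterate_succ_apply']
    generalize collapse^[n] p = r at ih
    obtain rfl | h0 := eq_or_ne r 0
    · exact .inl rfl
    obtain rfl | hl := eq_or_ne r (Fin.last (k + 1))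
    · exact .inl (by rw [collapse, if_neg h0, Fin.last_add_one])
    · refine .inr ?_
      rw [collapse, if_neg h0, Fin.val_add_one_of_lt (Fin.lt_last_iff_ne_last.2 hl),
        ih.resolve_left h0, add_assoc]

theorem iterate_collapse_eq_zero (p : Fin (k + 2)) : collapse^[k + 2] p = 0 :=
  (val_iterate_collapse (k + 2) p).resolve_right fun h => by
    have := (collapse^[k + 2] p).isLt
    omega

theorem counter_token_overflow {d : Fin (k + 2) → Fin (b + 1)} (hd : d (-1) = Fin.last b)
    (j : Fin (k + 2)) :
    ∃ q, counter b k (token false 1 d j) 1 = some q ∧ cell q + 1 = collapse j := by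
  obtain rfl | hj := eq_or_ne j 0
  · refine ⟨_, by rw [counter_token_false_one_zero, if_pos rfl], ?_⟩
    rw [collapse, if_pos rfl]
    exact neg_add_cancel (1 : Fin (k + 2))
  rw [counter_token_false_one hj, collapse, if_neg hj]
  obtain rfl | hj' := eq_or_ne j (-1)
  · simp [carryDigit, hd, cell]
  · have hj1 : j + 1 ≠ 0 := fun h => hj' (eq_neg_of_add_eq_zero_left h)
    simp [carryDigit, hj, hj1, cell]

theorem reach_collapse :
    PFAReach (counter b k) (token true 0 0) (token true 0 0 ∘ collapse) := by
  let d : Fin (k + 2) → Fin (b + 1) := Function.update 0 (-1) (Fin.last b)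
  choose f hf hcell using counter_token_overflow (d := d) (by simp [d])
  calc PFAReach (counter b k) (token true 0 0) (token true 0 d) := reach_digit (by simp) _
    PFAReach _ _ (token false 1 d) := reach_rotate ..
    PFAReach _ _ f := .of_step 1 hf
    PFAReach _ _ (token true 0 0 ∘ cell ∘ f) := reach_reset f
    PFAReach _ _ (token true 0 0 ∘ (· + 1) ∘ cell ∘ f) := (reach_reset_add 1).comp _
    _ = token true 0 0 ∘ collapse := by simp only [← funext hcell, Function.comp_def]

theorem exists_isCareSyncWord_counter (b k : ℕ) : ∃ w, IsCareSyncWord (counter b k) w := by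
  obtain ⟨w, hw⟩ := (reach_reset id).trans ((reach_collapse.iterate (k + 2)).comp (cell (b := b)))
  refine ⟨w, token true 0 0 0, fun q => ?_⟩
  simpa only [id, Function.comp_apply, iterate_collapse_eq_zero] using hw q

theorem exists_reach_state (q : CounterState b k) :
    ∃ j, PFAReach (counter b k) (fun _ : Unit => token true 0 0 j) fun _ => q := by
  obtain ⟨armed, _ | x, p⟩ := q
  · have hmarker : token armed p 0 0 = ((armed, none, p) : CounterState b k) := by simp [token]
    rw [← hmarker]
    exact ⟨0, (reach_rotate true armed 0 p 0).comp fun _ => 0⟩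
  · have hdigit : token armed (p - 1) (Function.update 0 1 x) 1 = (armed, some x, p) := by
      simp [token]
    rw [← hdigit]
    exact ⟨1, ((reach_digit one_ne_zero x).trans (reach_rotate true armed 0 (p - 1) _)).comp
      fun _ => 1⟩

theorem pfaTransitive_counter (b k : ℕ) : PFATransitive (counter b k) := by
  intro q q'
  obtain ⟨j, hj⟩ := exists_reach_state q'
  have hshift : PFAReach (counter b k) (fun _ : Unit => token true 0 0 (cell q))
      fun _ => token true 0 0 j := by
    simpa [Function.comp_def] using (reach_reset_add (j - cell q)).comp fun _ : Unit => cell q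
  obtain ⟨w, hw⟩ := ((reach_reset fun _ : Unit => q).trans hshift).trans hj
  exact ⟨w, hw ()⟩

end UpperBound

theorem isSlowPFA_counter (b k : ℕ) : IsSlowPFA (counter b k) (b ^ (k + 1)) where
  transitive := pfaTransitive_counter b k
  exists_sync := exists_isCareSyncWord_counter b k
  le_length _ := pow_le_length_of_isCareSyncWord

theorem card_counterState (b k : ℕ) :
    Fintype.card (CounterState b k) = 2 * (b + 2) * (k + 2) := by
  simp [mul_assoc]

theorem exists_isSlowPFA_fin (b k m : ℕ) :
    ∃ δ : Fin (2 * (b + 2) * (k + 2) + m) → Fin 2 → Option (Fin (2 * (b + 2) * (k + 2) + m)),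
      IsSlowPFA δ (b ^ (k + 1)) := by
  have hloop : counter b k (token true 0 0 0) 0 = some (token true 0 0 0) := rfl
  obtain ⟨δ, -, hδ, -⟩ := (isSlowPFA_counter b k).exists_fin_card_add hloop m
  rw [← card_counterState]
  exact ⟨δ, hδ⟩

end Counter

theorem exists_binary_transitive_pfa_golden_general {b : ℕ} (hb : 0 < b) :
    ∃ c : ℝ, 0 < c ∧ ∃ N : ℕ, ∀ n : ℕ, N ≤ n →
    ∃ δ : Fin n → Fin 2 → Option (Fin n),
      PFATransitive δ ∧ (∃ w : List (Fin 2), IsCareSyncWord δ w) ∧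
      ∀ w : List (Fin 2), IsCareSyncWord δ w →
        c * (b : ℝ) ^ ((n : ℝ) / (2 * (b + 2))) ≤ (w.length : ℝ) := by
  refine ⟨((b : ℝ) ^ 2)⁻¹, by positivity, 2 * (2 * (b + 2)), fun n hn => ?_⟩
  have hstates : 0 < 2 * (b + 2) := by positivity
  obtain ⟨k, hk⟩ := Nat.exists_eq_add_of_le' ((Nat.le_div_iff_mul_le hstates).2 hn)
  obtain ⟨m, rfl⟩ := Nat.exists_eq_add_of_le (hk ▸ Nat.mul_div_le n (2 * (b + 2)))
  have hexp : ((2 * (b + 2) * (k + 2) + m : ℕ) : ℝ) / (2 * (b + 2)) ≤ (k + 3 : ℕ) := by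
    have h := (Nat.lt_mul_div_succ (2 * (b + 2) * (k + 2) + m) hstates).le
    rw [hk] at h
    rw [div_le_iff₀' (by positivity)]
    exact_mod_cast h
  obtain ⟨δ, hδ⟩ := exists_isSlowPFA_fin b k m
  refine ⟨δ, hδ.transitive, hδ.exists_sync, fun w hw => ?_⟩
  rw [inv_mul_le_iff₀ (by positivity)]
  calc (b : ℝ) ^ (((2 * (b + 2) * (k + 2) + m : ℕ) : ℝ) / (2 * (b + 2)))
      ≤ (b : ℝ) ^ ((k + 3 : ℕ) : ℝ) :=
        Real.rpow_le_rpow_of_exponent_le (by exact_mod_cast hb) hexp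
    _ = (b : ℝ) ^ 2 * (b ^ (k + 1) : ℕ) := by
        rw [Real.rpow_natCast]
        push_cast
        ring
    _ ≤ (b : ℝ) ^ 2 * w.length := by gcongr; exact hδ.le_length w hw

theorem goldenRatio_rpow_le_three_rpow {x : ℝ} (hx : 0 ≤ x) :
    Real.goldenRatio ^ (x / 5) ≤ 3 ^ (x / 10) := by
  have hsq : Real.goldenRatio ^ 2 ≤ 3 := by
    linarith [Real.goldenRatio_sq, Real.goldenRatio_lt_two]
  calc Real.goldenRatio ^ (x / 5) = (Real.goldenRatio ^ 2) ^ (x / 10) := by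
        rw [← Real.rpow_natCast, ← Real.rpow_mul Real.goldenRatio_pos.le]
        congr 1
        push_cast
        ring
    _ ≤ 3 ^ (x / 10) := by gcongr

/-- There is a sequence of transitive carefully synchronizing PFAs on two symbols with
`n` states and shortest carefully synchronizing word length `Ω(φ^{n/5})`,
where `φ = (1+√5)/2` is the golden ratio. -/
theorem exists_binary_transitive_pfa_golden : ∃ c : ℝ, 0 < c ∧ ∃ N : ℕ, ∀ n : ℕ, N ≤ n →
    ∃ δ : Fin n → Fin 2 → Option (Fin n),
      PFATransitive δ ∧ (∃ w : List (Fin 2), IsCareSyncWord δ w) ∧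
      ∀ w : List (Fin 2), IsCareSyncWord δ w →
        c * ((1 + Real.sqrt 5) / 2) ^ ((n : ℝ) / 5) ≤ (w.length : ℝ) := by
  obtain ⟨c, hc, N, h⟩ := exists_binary_transitive_pfa_golden_general three_pos
  refine ⟨c, hc, N, fun n hn => ?_⟩
  obtain ⟨δ, htrans, hsync, hlen⟩ := h n hn
  refine ⟨δ, htrans, hsync, fun w hw => ?_⟩
  calc c * Real.goldenRatio ^ ((n : ℝ) / 5) ≤ c * 3 ^ ((n : ℝ) / 10) := by
        gcongr
        exact goldenRatio_rpow_le_three_rpow n.cast_nonneg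
    _ = c * ((3 : ℕ) : ℝ) ^ ((n : ℝ) / (2 * ((3 : ℕ) + 2))) := by norm_num
    _ ≤ w.length := hlen w hw
end

section
/- Let h ≥ 1, m ≥ 2 and k ≥ h+1. Then C^h A^{k−h} rewrites in one or more steps of the system R_{h,m} to C^h A^{k−h−1} B, where A = A^{(1)} and B = A^{(m)}. Furthermore, the smallest possible number of →_{R_{h,m}} steps needed to rewrite C^h A^{k−h} to a string ending in B is exactly f_{h,m}(k), where f_{h,m} satisfies the recursion f_{h,m}(k) = 0 for 1 ≤ k ≤ h and f_{h,m}(k) = (m−1)·(1 + Σ_{j=1}^{h} f_{h,m}(k−j)) for k ≥ h+1. -/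
/-- The alphabet `{A^{(1)}, …, A^{(m)}, C}`: `LetterM.A t` stands for `A^{(t)}` and
`LetterM.C` for `C`. -/
inductive LetterM : Type
  | A (t : ℕ)
  | C
  deriving DecidableEq

open LetterM

/-- The rules of the rewrite system `R_{h,m}`:
`C^i B^{h−i} A^{(t)} → C^i A^{h−i} A^{(t+1)}` for `i = 0,…,h` and `t = 1,…,m−1`,
where `A = A^{(1)}` and `B = A^{(m)}`. -/
def RuleHM (h m : ℕ) (l r : List LetterM) : Prop :=
  ∃ i ≤ h, ∃ t : ℕ, 1 ≤ t ∧ t ≤ m - 1 ∧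
    l = List.replicate i C ++ List.replicate (h - i) (A m) ++ [A t] ∧
    r = List.replicate i C ++ List.replicate (h - i) (A 1) ++ [A (t + 1)]

/-- `u →_{R_{h,m}} v`: one rewrite step of the system `R_{h,m}`. -/
def StepHM (h m : ℕ) (u v : List LetterM) : Prop :=
  ∃ u₁ u₂ l r, RuleHM h m l r ∧ u = u₁ ++ l ++ u₂ ∧ v = u₁ ++ r ++ u₂

/-- `StepHMN h m n u v`: `u` rewrites to `v` in exactly `n` steps of `R_{h,m}`. -/
inductive StepHMN (h m : ℕ) : ℕ → List LetterM → List LetterM → Prop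
  | refl (u : List LetterM) : StepHMN h m 0 u u
  | tail {n : ℕ} {u v w : List LetterM} :
      StepHMN h m n u v → StepHM h m v w → StepHMN h m (n + 1) u w

/-!
Weight the letter at position `q` (counted from `1`) by `f q` times its level, where `A^{(t)}` has
level `t - 1` and `C` has level `0`. A step whose left-hand side starts at position `p` gains
`f (p + h)` at the last letter it touches and loses `(m - 1) * f q` at each `B` it resets. The
occurrences of `C` never leave the first `h` positions, where `f` vanishes, so the recursion
for `f` says precisely that every step raises the weight by `m - 1`. The number of steps is thus
determined by the end points of a rewriting: the weight of `C^h A^{k-h}` is `0` and that of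
`C^h A^{k-h-1} B` is `(m - 1) * f k`, while any other string of this length ending in `B` weighs at
least as much.

That `C^h A^{k-h-1} B` is reached at all follows by strong induction: before each increment of the
last letter, turn the (at most `h`) letters `A` preceding it into `B`, from right to left.
-/

section Recursion

/-- `IsStepCount h m f` says that `f` is the function `f_{h,m}` of the theorem: it vanishes on
`1, …, h` and satisfies the recursion beyond. The value `f 0` is left unconstrained. -/
structure IsStepCount (h m : ℕ) (f : ℕ → ℕ) : Prop where
  eq_zero : ∀ j, 1 ≤ j → j ≤ h → f j = 0
  recurrence : ∀ j, h + 1 ≤ j → f j = (m - 1) * (1 + ∑ i ∈ Finset.Icc 1 h, f (j - i))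

theorem IsStepCount.apply_add {h m p : ℕ} {f : ℕ → ℕ} (hf : IsStepCount h m f) (hp : 1 ≤ p) :
    f (p + h) = (m - 1) * (1 + ∑ j ∈ Finset.range h, f (p + j)) := by
  rw [hf.recurrence (p + h) (by omega)]
  congr 2
  refine Finset.sum_nbij' (h - ·) (h - ·) ?_ ?_ ?_ ?_ ?_ <;>
    simp only [Finset.mem_Icc, Finset.mem_range]
  · omega
  · omega
  · omega
  · omega
  · intro i hi
    rw [Nat.add_sub_assoc hi.2]

end Recursion

section Weight

/-- The level `t - 1` of the letter `A^{(t)}`, the number of increments that produce it from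
`A^{(1)}`. The letter `C` and the spurious `A 0` get level `0`. -/
def LetterM.level : LetterM → ℕ
  | A t => t - 1
  | C => 0

/-- The weight of a string whose first letter has position `p`: the sum of the levels of its
letters, the letter at position `q` being multiplied by `f q`. -/
def levelWeight (f : ℕ → ℕ) : ℕ → List LetterM → ℕ
  | _, [] => 0
  | p, x :: u => f p * x.level + levelWeight f (p + 1) u

variable (f : ℕ → ℕ) (p : ℕ)

theorem levelWeight_append (u v : List LetterM) :
    levelWeight f p (u ++ v) = levelWeight f p u + levelWeight f (p + u.length) v := by
  induction u generalizing p with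
  | nil => simp [levelWeight]
  | cons x u ih =>
    simp only [List.cons_append, levelWeight, ih, List.length_cons, add_assoc, add_comm 1]

theorem levelWeight_singleton (x : LetterM) : levelWeight f p [x] = f p * x.level := rfl

theorem levelWeight_replicate (n : ℕ) (x : LetterM) :
    levelWeight f p (List.replicate n x) = (∑ j ∈ Finset.range n, f (p + j)) * x.level := by
  induction n with
  | zero => simp [levelWeight]
  | succ n ih =>
    rw [List.replicate_succ', levelWeight_append, ih, levelWeight_singleton,
      List.length_replicate, Finset.sum_range_succ, add_mul]

theorem levelWeight_rule (i s m : ℕ) {t : ℕ} (ht : 1 ≤ t) :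
    levelWeight f p (List.replicate i C ++ List.replicate s (A 1) ++ [A (t + 1)]) +
        (m - 1) * ∑ j ∈ Finset.range s, f (p + i + j) =
      levelWeight f p (List.replicate i C ++ List.replicate s (A m) ++ [A t]) +
        f (p + (i + s)) := by
  obtain ⟨t, rfl⟩ := Nat.exists_eq_add_of_le' ht
  simp only [levelWeight_append, levelWeight_replicate, levelWeight_singleton, LetterM.level,
    List.length_append, List.length_replicate, Nat.add_sub_cancel, Nat.sub_self]
  ring

end Weight

section Invariant

variable {h m n : ℕ} {u v : List LetterM}

theorem length_add_lt_of_notMem_drop {α : Type*} {x : α} {u v : List α} {i j : ℕ}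
    (hx : x ∉ (u ++ List.replicate i x ++ v).drop n) (hj : j < i) : u.length + j < n := by
  contrapose! hx
  refine List.mem_drop_iff_getElem.2 ⟨u.length + j - n, by simp; omega, ?_⟩
  simp [Nat.add_sub_cancel' hx, hj]

theorem StepHM.map_eq_C (huv : StepHM h m u v) : v.map (· = C) = u.map (· = C) := by
  obtain ⟨u₁, u₂, l, r, ⟨i, -, t, -, -, rfl, rfl⟩, rfl, rfl⟩ := huv
  simp

theorem StepHM.C_mem_drop_iff (huv : StepHM h m u v) : C ∈ v.drop n ↔ C ∈ u.drop n := by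
  have mem_iff (w : List LetterM) : C ∈ w.drop n ↔ True ∈ (w.map (· = C)).drop n := by
    simp [← List.map_drop]
  rw [mem_iff, mem_iff, huv.map_eq_C]

theorem StepHM.length_eq (huv : StepHM h m u v) : v.length = u.length := by
  simpa using congrArg List.length huv.map_eq_C

theorem StepHMN.C_mem_drop_iff {l : ℕ} (huv : StepHMN h m n u v) :
    C ∈ v.drop l ↔ C ∈ u.drop l := by
  induction huv with
  | refl => rfl
  | tail _ hstep ih => exact hstep.C_mem_drop_iff.trans ih

theorem StepHMN.length_eq (huv : StepHMN h m n u v) : v.length = u.length := by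
  induction huv with
  | refl => rfl
  | tail _ hstep ih => exact hstep.length_eq.trans ih

variable {f : ℕ → ℕ}

theorem StepHM.levelWeight_eq (hf : IsStepCount h m f) (hu : C ∉ u.drop h)
    (huv : StepHM h m u v) : levelWeight f 1 v = levelWeight f 1 u + (m - 1) := by
  obtain ⟨u₁, u₂, l, r, ⟨i, hi, t, ht, -, rfl, rfl⟩, rfl, rfl⟩ := huv
  obtain ⟨s, rfl⟩ := Nat.exists_eq_add_of_le hi
  rw [Nat.add_sub_cancel_left] at hu ⊢
  have hC : ∀ j ∈ Finset.range i, f (1 + u₁.length + j) = 0 := fun j hj ↦ by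
    have := length_add_lt_of_notMem_drop (by simpa using hu) (Finset.mem_range.1 hj)
    exact hf.eq_zero _ (by omega) (by omega)
  have hrec := hf.apply_add (p := 1 + u₁.length) (by omega)
  rw [Finset.sum_range_add, Finset.sum_eq_zero hC, zero_add] at hrec
  have hrule := levelWeight_rule f (1 + u₁.length) i s m ht
  simp only [add_assoc] at hrec hrule
  simp only [levelWeight_append _ _ (u₁ ++ _), levelWeight_append _ _ u₁,
    List.length_append, List.length_replicate, List.length_singleton, add_assoc]
  linarith

theorem StepHMN.levelWeight_eq (hf : IsStepCount h m f) (hu : C ∉ u.drop h)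
    (huv : StepHMN h m n u v) : levelWeight f 1 v = levelWeight f 1 u + n * (m - 1) := by
  induction huv with
  | refl => simp
  | tail hprev hstep ih =>
    rw [hstep.levelWeight_eq hf (hprev.C_mem_drop_iff.not.2 hu), ih hu, add_assoc,
      ← Nat.succ_mul]

end Invariant

section StartWord

/-- The string `C^h A^j` with `A = A^{(1)}`, from which the rewriting starts. -/
def startWord (h j : ℕ) : List LetterM :=
  List.replicate h C ++ List.replicate j (A 1)

theorem length_startWord (h j : ℕ) : (startWord h j).length = h + j := by
  simp [startWord]

theorem startWord_add (h a s : ℕ) :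
    startWord h (a + s) = startWord h a ++ List.replicate s (A 1) := by
  rw [startWord, List.replicate_add, ← List.append_assoc, ← startWord]

theorem startWord_succ (h j : ℕ) : startWord h (j + 1) = startWord h j ++ [A 1] :=
  startWord_add h j 1

theorem C_notMem_drop_startWord (h j : ℕ) : C ∉ (startWord h j).drop h := by
  simp [startWord, List.mem_replicate]

theorem levelWeight_startWord (f : ℕ → ℕ) (p h j : ℕ) : levelWeight f p (startWord h j) = 0 := by
  simp [startWord, levelWeight_append, levelWeight_replicate, LetterM.level]

variable {h m j n : ℕ} {f : ℕ → ℕ}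

theorem StepHMN.steps_mul_eq (hf : IsStepCount h m f) {w : List LetterM}
    (hw : StepHMN h m n (startWord h (j + 1)) (w ++ [A m])) :
    n * (m - 1) = levelWeight f 1 w + f (h + (j + 1)) * (m - 1) := by
  have hlen : 1 + w.length = h + (j + 1) := by
    simpa [length_startWord, add_comm] using hw.length_eq
  have hweight := hw.levelWeight_eq hf (C_notMem_drop_startWord h (j + 1))
  rw [levelWeight_startWord, zero_add, levelWeight_append, levelWeight_singleton, hlen] at hweight
  exact hweight.symm

theorem StepHMN.stepCount_le (hf : IsStepCount h m f) (hm : 2 ≤ m) {w : List LetterM}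
    (hw : StepHMN h m n (startWord h (j + 1)) (w ++ [A m])) : f (h + (j + 1)) ≤ n :=
  Nat.le_of_mul_le_mul_right (by have := hw.steps_mul_eq hf; omega)
    (Nat.sub_pos_of_lt hm)

theorem StepHMN.eq_stepCount (hf : IsStepCount h m f) (hm : 2 ≤ m)
    (hw : StepHMN h m n (startWord h (j + 1)) (startWord h j ++ [A m])) :
    n = f (h + (j + 1)) :=
  Nat.eq_of_mul_eq_mul_right (Nat.sub_pos_of_lt hm) <| by
    rw [hw.steps_mul_eq hf, levelWeight_startWord, zero_add]

end StartWord

section Reachability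

open Relation

variable {h m : ℕ}

theorem exists_stepHMN_of_reflTransGen {u v : List LetterM}
    (huv : ReflTransGen (StepHM h m) u v) : ∃ n, StepHMN h m n u v := by
  induction huv with
  | refl => exact ⟨0, .refl u⟩
  | tail _ hstep ih =>
    obtain ⟨n, hn⟩ := ih
    exact ⟨n + 1, hn.tail hstep⟩

theorem StepHM.append_right {u v : List LetterM} (huv : StepHM h m u v) (w : List LetterM) :
    StepHM h m (u ++ w) (v ++ w) := by
  obtain ⟨u₁, u₂, l, r, hr, rfl, rfl⟩ := huv
  exact ⟨u₁, u₂ ++ w, l, r, hr, by simp, by simp⟩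

theorem reflTransGen_stepHM_append_right {u v : List LetterM}
    (huv : ReflTransGen (StepHM h m) u v) (w : List LetterM) :
    ReflTransGen (StepHM h m) (u ++ w) (v ++ w) :=
  huv.lift (· ++ w) fun _ _ hab ↦ hab.append_right w

theorem stepHM_rule_append_left (w : List LetterM) (i s : ℕ) {t : ℕ} (ht : 1 ≤ t) (htm : t < m) :
    StepHM (i + s) m (w ++ List.replicate i C ++ List.replicate s (A m) ++ [A t])
      (w ++ List.replicate i C ++ List.replicate s (A 1) ++ [A (t + 1)]) :=
  ⟨w, [], _, _, ⟨i, Nat.le_add_right i s, t, ht, by omega, rfl, rfl⟩, by simp, by simp⟩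

theorem exists_stepHM_increment_last (j : ℕ) {t : ℕ} (ht : 1 ≤ t) (htm : t < m) :
    ∃ a s, a + s = j ∧ StepHM h m (startWord h a ++ List.replicate s (A m) ++ [A t])
      (startWord h j ++ [A (t + 1)]) := by
  rcases le_total h j with hj | hj
  · obtain ⟨a, rfl⟩ := Nat.exists_eq_add_of_le' hj
    refine ⟨a, h, rfl, ?_⟩
    simpa [startWord_add] using stepHM_rule_append_left (startWord h a) 0 h ht htm
  · obtain ⟨i, rfl⟩ := Nat.exists_eq_add_of_le' hj
    have hstep := stepHM_rule_append_left (List.replicate j C) i j ht htm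
    rw [List.replicate_append_replicate, add_comm j i] at hstep
    exact ⟨0, j, zero_add j, by simpa [startWord] using hstep⟩

theorem reflTransGen_startWord_append_replicate_B {a s : ℕ}
    (hlast : ∀ b < a + s,
      ReflTransGen (StepHM h m) (startWord h (b + 1)) (startWord h b ++ [A m])) :
    ReflTransGen (StepHM h m) (startWord h (a + s))
      (startWord h a ++ List.replicate s (A m)) := by
  induction s generalizing a with
  | zero => simpa using ReflTransGen.refl
  | succ s ih =>
    rw [← Nat.add_assoc, Nat.add_right_comm] at hlast ⊢
    simpa [List.replicate_succ] using (ih hlast).trans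
      (reflTransGen_stepHM_append_right (hlast a (by omega)) (List.replicate s (A m)))

theorem reflTransGen_startWord_append_A {j t : ℕ} (ht : 1 ≤ t) (htm : t ≤ m)
    (hlast : ∀ b < j,
      ReflTransGen (StepHM h m) (startWord h (b + 1)) (startWord h b ++ [A m])) :
    ReflTransGen (StepHM h m) (startWord h (j + 1)) (startWord h j ++ [A t]) := by
  induction t, ht using Nat.le_induction with
  | base => rw [startWord_succ]
  | succ t ht ih =>
    obtain ⟨a, s, rfl, hstep⟩ := exists_stepHM_increment_last (h := h) j ht htm
    have hfill := reflTransGen_startWord_append_replicate_B hlast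
    exact ((ih (by omega)).trans (reflTransGen_stepHM_append_right hfill [A t])).tail hstep

theorem reflTransGen_startWord_append_B (hm : 1 ≤ m) (j : ℕ) :
    ReflTransGen (StepHM h m) (startWord h (j + 1)) (startWord h j ++ [A m]) := by
  induction j using Nat.strong_induction_on with
  | _ j ih => exact reflTransGen_startWord_append_A hm le_rfl ih

theorem transGen_startWord_append_B (hm : 2 ≤ m) (j : ℕ) :
    TransGen (StepHM h m) (startWord h (j + 1)) (startWord h j ++ [A m]) := by
  refine (reflTransGen_iff_eq_or_transGen.1
    (reflTransGen_startWord_append_B (by omega) j)).resolve_left fun heq ↦ ?_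
  obtain rfl : m = 1 := by simpa [startWord_succ] using heq
  omega

end Reachability

/-- For `h ≥ 1`, `m ≥ 2` and `k ≥ h+1`:
`C^h A^{k−h} →_{R_{h,m}}^+ C^h A^{k−h−1} B` (with `A = A^{(1)}`, `B = A^{(m)}`), and
the smallest possible number of `→_{R_{h,m}}` steps needed to rewrite `C^h A^{k−h}` to
a string ending in `B` is exactly `f_{h,m}(k)`, where `f_{h,m}(k) = 0` for
`1 ≤ k ≤ h` and `f_{h,m}(k) = (m−1)·(1 + Σ_{j=1}^{h} f_{h,m}(k−j))` for `k ≥ h+1`. -/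
theorem Rhm_min_steps (h m k : ℕ) (hh : 1 ≤ h) (hm : 2 ≤ m) (hk : h + 1 ≤ k)
    (f : ℕ → ℕ)
    (hf0 : ∀ j : ℕ, 1 ≤ j → j ≤ h → f j = 0)
    (hfrec : ∀ j : ℕ, h + 1 ≤ j →
      f j = (m - 1) * (1 + ∑ i ∈ Finset.Icc 1 h, f (j - i))) :
    Relation.TransGen (StepHM h m)
        (List.replicate h C ++ List.replicate (k - h) (A 1))
        (List.replicate h C ++ List.replicate (k - h - 1) (A 1) ++ [A m]) ∧
      (∃ v : List LetterM,
          StepHMN h m (f k) (List.replicate h C ++ List.replicate (k - h) (A 1)) v ∧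
          v.getLast? = some (A m)) ∧
      ∀ (n : ℕ) (v : List LetterM),
        StepHMN h m n (List.replicate h C ++ List.replicate (k - h) (A 1)) v →
        v.getLast? = some (A m) → f k ≤ n := by
  obtain ⟨j, rfl⟩ : ∃ j, k = h + (j + 1) := ⟨k - h - 1, by omega⟩
  have hf : IsStepCount h m f := ⟨hf0, hfrec⟩
  have hreach := transGen_startWord_append_B (h := h) hm j
  rw [Nat.add_sub_cancel_left, Nat.add_sub_cancel]
  refine ⟨hreach, ?_, fun n v hv hlast ↦ ?_⟩
  · obtain ⟨n, hn⟩ := exists_stepHMN_of_reflTransGen hreach.to_reflTransGen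
    exact ⟨_, hn.eq_stepCount hf hm ▸ hn, List.getLast?_concat⟩
  · obtain ⟨w, rfl⟩ := List.getLast?_eq_some_iff.1 hlast
    exact StepHMN.stepCount_le hf hm hv
end
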